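/- Suppose F = E_ξ[F(·;ξ)] satisfies the weak linear regularity property with constants σ_{F,μ} and β = 0, and suppose the interpolation (shared-minimizer) condition holds: for every x* ∈ X* and every ξ ∈ Ω, 0 ∈ ∂F(x*;ξ). Then the SPP iterates with constant stepsize μ > 0 (with μ σ_{F,μ} ≤ 1) converge linearly: E[ dist_{X*}²(x^k) ] ≤ (1 − μ σ_{F,μ})^k · dist_{X*}²(x^0) for all k ≥ 0. -/

import Mathlib

/- Statement 12: Corollary `corr_linconv`.
If `F` satisfies weak linear regularity with constants `σ_{F,μ}` and `β = 0`, and the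
interpolation (shared-minimizer) condition holds — `0 ∈ ∂F(x*;ξ)` for every `x* ∈ X*`
and every `ξ` — then constant-stepsize SPP (stepsize `μ > 0` with `μ σ_{F,μ} ≤ 1`)
converges linearly:
`E[dist²_{X*}(x^k)] ≤ (1 − μ σ_{F,μ})^k · dist²_{X*}(x^0)` for all `k ≥ 0`. -/

open MeasureTheory Metric Set
open scoped RealInnerProductSpace

noncomputable section

/-
The proximal objective `F(·;ξ) + ‖· - x‖² / (2μ)` is `1/μ`-strongly convex, so its minimizer
`z = z_μ(x;ξ)` satisfies `‖z - x*‖² ≤ ‖x - x*‖² - 2μ (env(x;ξ) - F(x*;ξ))`, where `env(x;ξ)` is the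
minimum value. Integrate over `ξ`: by interpolation `E F(x*;ξ) ≤ F_μ*`, so weak linear regularity
gives `E dist²(z) ≤ ‖x - x*‖² - μσ dist²(x)`. Let `x*` approach the infimum over `X*` to obtain the
contraction factor `1 - μσ` for one step, and iterate by independence of the samples.

Nothing makes the proximal map measurable in `ξ`, so expectations of squared distances are
estimated as lower Lebesgue integrals `∫⁻`; a bound on these implies the one on Bochner integrals.
-/

section Convexity

variable {E : Type*} [NormedAddCommGroup E]

lemma uniformConvexOn_add_le_of_isMinOn [NormedSpace ℝ E] {s : Set E} {φ : ℝ → ℝ} {f : E → ℝ}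
    {z y : E} (hf : UniformConvexOn s φ f) (hz : z ∈ s) (hmin : IsMinOn f s z) (hy : y ∈ s) :
    f z + φ ‖z - y‖ ≤ f y := by
  have hsegment : ∀ a ∈ Ioo (0 : ℝ) 1, f z + a * φ ‖z - y‖ ≤ f y := by
    rintro a ⟨ha, ha'⟩
    have hb : 0 < 1 - a := sub_pos.2 ha'
    have hab : a + (1 - a) = 1 := add_sub_cancel a 1
    have hle := (hmin (hf.1 hz hy ha.le hb.le hab)).trans (hf.2 hz hy ha.le hb.le hab)
    simp only [smul_eq_mul] at hle
    refine le_of_mul_le_mul_left ?_ hb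
    linarith
  have hclosed : IsClosed {a : ℝ | f z + a * φ ‖z - y‖ ≤ f y} :=
    isClosed_le (by fun_prop) continuous_const
  have hone : (1 : ℝ) ∈ closure (Ioo 0 1) := by simp [closure_Ioo]
  have hend : f z + 1 * φ ‖z - y‖ ≤ f y := closure_minimal hsegment hclosed hone
  rwa [one_mul] at hend

/-- The function `y ↦ f y + ‖y - x‖² / (2μ)` minimized by the proximal map of `f` at `x`. -/
def proxObjective (f : E → ℝ) (μ : ℝ) (x y : E) : ℝ :=
  f y + ‖y - x‖ ^ 2 / (2 * μ)

/-- `z` is a proximal point of `f` at `x` with stepsize `μ`. The extended-valued convex function of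
the paper is encoded by its effective domain `D` and its finite values `f` on `D`. -/
def IsProxPoint (D : Set E) (f : E → ℝ) (μ : ℝ) (x z : E) : Prop :=
  z ∈ D ∧ IsMinOn (proxObjective f μ x) D z

variable [InnerProductSpace ℝ E] {D : Set E} {f : E → ℝ} {μ : ℝ} {x y z : E}

lemma strongConvexOn_proxObjective (hf : ConvexOn ℝ D f) (μ : ℝ) (x : E) :
    StrongConvexOn D μ⁻¹ (proxObjective f μ x) := by
  have hexpand : (fun y ↦ proxObjective f μ x y - μ⁻¹ / 2 * ‖y‖ ^ 2) =
      fun y ↦ f y + (((-μ⁻¹) • innerₛₗ ℝ x) y + ‖x‖ ^ 2 / (2 * μ)) := by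
    ext y
    simp only [proxObjective, norm_sub_sq_real, real_inner_comm, LinearMap.smul_apply,
      innerₛₗ_apply_apply, smul_eq_mul]
    ring
  rw [strongConvexOn_iff_convex, hexpand]
  exact hf.add ((LinearMap.convexOn _ hf.1).add_const _)

lemma IsProxPoint.sq_dist_le (hz : IsProxPoint D f μ x z) (hf : ConvexOn ℝ D f) (hμ : 0 < μ)
    (hy : y ∈ D) :
    dist z y ^ 2 ≤ dist x y ^ 2 - 2 * μ * (proxObjective f μ x z - f y) := by
  have hgrowth : proxObjective f μ x z + μ⁻¹ / 2 * ‖z - y‖ ^ 2 ≤ proxObjective f μ x y :=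
    uniformConvexOn_add_le_of_isMinOn (strongConvexOn_proxObjective hf μ x) hz.1 hz.2 hy
  have hscaled := mul_le_mul_of_nonneg_left hgrowth (by positivity : 0 ≤ 2 * μ)
  have hleft : 2 * μ * (proxObjective f μ x z + μ⁻¹ / 2 * ‖z - y‖ ^ 2) =
      2 * μ * proxObjective f μ x z + ‖z - y‖ ^ 2 := by field_simp
  have hright : 2 * μ * proxObjective f μ x y = 2 * μ * f y + ‖y - x‖ ^ 2 := by
    rw [proxObjective]; field_simp
  rw [dist_eq_norm, dist_comm x y, dist_eq_norm]
  linarith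

end Convexity

lemma le_comp_infDist {E α : Type*} [PseudoMetricSpace E] [TopologicalSpace α] [Preorder α]
    [OrderClosedTopology α] {X : Set E} {g : ℝ → α} (hX : X.Nonempty) (hg : Continuous g) {a : α}
    {x : E} (h : ∀ y ∈ X, a ≤ g (dist x y)) : a ≤ g (infDist x X) :=
  closure_minimal (t := {r | a ≤ g r}) (forall_mem_image.2 h) (isClosed_le continuous_const hg)
    ((isGLB_infDist hX).mem_closure (hX.image _))

section Integration

variable {Ω : Type*} [MeasurableSpace Ω]

lemma integral_le_of_lintegral_ofReal_le {P : Measure Ω} {f : Ω → ℝ} {c : ℝ} (hf : 0 ≤ f)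
    (hc : 0 ≤ c) (h : ∫⁻ ω, ENNReal.ofReal (f ω) ∂P ≤ ENNReal.ofReal c) : ∫ ω, f ω ∂P ≤ c := by
  have hnorm : ∀ ω, ‖f ω‖ = f ω := fun ω ↦ Real.norm_of_nonneg (hf ω)
  calc ∫ ω, f ω ∂P ≤ ‖∫ ω, f ω ∂P‖ := Real.le_norm_self _
    _ ≤ (∫⁻ ω, ENNReal.ofReal (f ω) ∂P).toReal := by
      simpa only [hnorm] using norm_integral_le_lintegral_norm f
    _ ≤ c := ENNReal.toReal_le_of_le_ofReal hc h

lemma lintegral_pi_fin_succ_le (P : Measure Ω) [SigmaFinite P] {k : ℕ}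
    (f : (Fin k → Ω) → Ω → ENNReal) :
    ∫⁻ ω : Fin (k + 1) → Ω, f (Fin.init ω) (ω (Fin.last k)) ∂(Measure.pi fun _ ↦ P) ≤
      ∫⁻ ω, ∫⁻ ξ, f ω ξ ∂P ∂(Measure.pi fun _ ↦ P) := by
  let e := (MeasurableEquiv.piFinSuccAbove (fun _ : Fin (k + 1) ↦ Ω) (Fin.last k)).trans
    MeasurableEquiv.prodComm
  have he : MeasurePreserving e (Measure.pi fun _ ↦ P) ((Measure.pi fun _ ↦ P).prod P) :=
    Measure.measurePreserving_swap.comp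
      (measurePreserving_piFinSuccAbove (fun _ : Fin (k + 1) ↦ P) (Fin.last k))
  have he_apply : ∀ ω, e ω = (Fin.init ω, ω (Fin.last k)) := fun ω ↦
    Prod.ext (Fin.removeNth_last ω) rfl
  calc ∫⁻ ω : Fin (k + 1) → Ω, f (Fin.init ω) (ω (Fin.last k)) ∂(Measure.pi fun _ ↦ P)
      = ∫⁻ p, f p.1 p.2 ∂((Measure.pi fun _ ↦ P).prod P) := by
        rw [← he.map_eq, lintegral_map_equiv]
        simp only [he_apply]
    _ ≤ ∫⁻ ω, ∫⁻ ξ, f ω ξ ∂P ∂(Measure.pi fun _ ↦ P) := lintegral_prod_le _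

lemma lintegral_traj_le_pow_mul {S : Type*} (P : Measure Ω) [SigmaFinite P] {T : S → Ω → S}
    {V : S → ENNReal} {c : ENNReal} (hc : c ≠ ⊤) (hT : ∀ x, ∫⁻ ξ, V (T x ξ) ∂P ≤ c * V x) {x₀ : S}
    {traj : (k : ℕ) → (Fin k → Ω) → S} (htraj_zero : ∀ ω, traj 0 ω = x₀)
    (htraj_succ : ∀ k (ω : Fin (k + 1) → Ω),
      traj (k + 1) ω = T (traj k (Fin.init ω)) (ω (Fin.last k))) (k : ℕ) :
    ∫⁻ ω, V (traj k ω) ∂(Measure.pi fun _ ↦ P) ≤ c ^ k * V x₀ := by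
  induction k with
  | zero => simp [htraj_zero]
  | succ k ih =>
    calc ∫⁻ ω, V (traj (k + 1) ω) ∂(Measure.pi fun _ ↦ P)
        ≤ ∫⁻ ω, ∫⁻ ξ, V (T (traj k ω) ξ) ∂P ∂(Measure.pi fun _ ↦ P) := by
          simpa only [htraj_succ] using lintegral_pi_fin_succ_le P fun ω ξ ↦ V (T (traj k ω) ξ)
      _ ≤ ∫⁻ ω, c * V (traj k ω) ∂(Measure.pi fun _ ↦ P) := lintegral_mono fun ω ↦ hT _
      _ = c * ∫⁻ ω, V (traj k ω) ∂(Measure.pi fun _ ↦ P) := lintegral_const_mul' _ _ hc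
      _ ≤ c * (c ^ k * V x₀) := by gcongr
      _ = c ^ (k + 1) * V x₀ := by rw [pow_succ', mul_assoc]

end Integration

section StochasticProximalPoint

variable {E : Type*} [NormedAddCommGroup E]
  {Ω : Type*} [MeasurableSpace Ω] {P : Measure Ω} {D : Ω → Set E} {F : Ω → E → ℝ} {μ : ℝ}

lemma integral_le_integral_proxObjective {x y : E} {z : Ω → E} (hμ : 0 ≤ μ) (hz : ∀ ξ, z ξ ∈ D ξ)
    (hzint : Integrable (fun ξ ↦ proxObjective (F ξ) μ x (z ξ)) P)
    (hymin : ∀ ξ, IsMinOn (F ξ) (D ξ) y) (hyint : Integrable (fun ξ ↦ F ξ y) P) :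
    ∫ ξ, F ξ y ∂P ≤ ∫ ξ, proxObjective (F ξ) μ x (z ξ) ∂P :=
  integral_mono hyint hzint fun ξ ↦
    (hymin ξ (hz ξ)).trans (le_add_of_nonneg_right (by positivity))

variable [InnerProductSpace ℝ E] [IsProbabilityMeasure P]

lemma lintegral_sq_dist_proxPoint_le {x y : E} {z : Ω → E}
    (hF : ∀ ξ, ConvexOn ℝ (D ξ) (F ξ)) (hμ : 0 < μ) (hz : ∀ ξ, IsProxPoint (D ξ) (F ξ) μ x (z ξ))
    (hzint : Integrable (fun ξ ↦ proxObjective (F ξ) μ x (z ξ)) P)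
    (hy : ∀ ξ, y ∈ D ξ) (hyint : Integrable (fun ξ ↦ F ξ y) P) :
    ∫⁻ ξ, ENNReal.ofReal (dist (z ξ) y ^ 2) ∂P ≤ ENNReal.ofReal
      (dist x y ^ 2 - 2 * μ * ((∫ ξ, proxObjective (F ξ) μ x (z ξ) ∂P) - ∫ ξ, F ξ y ∂P)) := by
  let bound : Ω → ℝ := fun ξ ↦ dist x y ^ 2 - 2 * μ * (proxObjective (F ξ) μ x (z ξ) - F ξ y)
  have hbound : ∀ ξ, dist (z ξ) y ^ 2 ≤ bound ξ := fun ξ ↦ (hz ξ).sq_dist_le (hF ξ) hμ (hy ξ)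
  have hgap : Integrable (fun ξ ↦ 2 * μ * (proxObjective (F ξ) μ x (z ξ) - F ξ y)) P :=
    (hzint.sub hyint).const_mul _
  calc ∫⁻ ξ, ENNReal.ofReal (dist (z ξ) y ^ 2) ∂P
      ≤ ∫⁻ ξ, ENNReal.ofReal (bound ξ) ∂P :=
        lintegral_mono fun ξ ↦ ENNReal.ofReal_le_ofReal (hbound ξ)
    _ = ENNReal.ofReal (∫ ξ, bound ξ ∂P) :=
        (ofReal_integral_eq_lintegral_ofReal ((integrable_const _).sub hgap)
          (ae_of_all _ fun ξ ↦ (sq_nonneg _).trans (hbound ξ))).symm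
    _ = _ := by
        rw [integral_sub (integrable_const _) hgap, integral_const_mul, integral_sub hzint hyint]
        simp

variable {X : Set E} {prox : E → Ω → E} {Fμ : ℝ} {σ : ℝ}

lemma lintegral_sq_infDist_prox_le (hF : ∀ ξ, ConvexOn ℝ (D ξ) (F ξ)) (hXne : X.Nonempty)
    (hXint : ∀ y ∈ X, Integrable (fun ξ ↦ F ξ y) P)
    (hXmin : ∀ y ∈ X, ∀ ξ, y ∈ D ξ ∧ IsMinOn (F ξ) (D ξ) y)
    (hμ : 0 < μ) (hprox : ∀ x ξ, IsProxPoint (D ξ) (F ξ) μ x (prox x ξ))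
    (henv : ∀ x, Integrable (fun ξ ↦ proxObjective (F ξ) μ x (prox x ξ)) P)
    (hFμ : IsGLB (range fun x ↦ ∫ ξ, proxObjective (F ξ) μ x (prox x ξ) ∂P) Fμ)
    (hWLR : ∀ x, σ / 2 * infDist x X ^ 2 ≤
      (∫ ξ, proxObjective (F ξ) μ x (prox x ξ) ∂P) - Fμ) (x : E) :
    ∫⁻ ξ, ENNReal.ofReal (infDist (prox x ξ) X ^ 2) ∂P ≤
      ENNReal.ofReal (1 - μ * σ) * ENNReal.ofReal (infDist x X ^ 2) := by
  have hdist : ∀ y ∈ X, ∫⁻ ξ, ENNReal.ofReal (infDist (prox x ξ) X ^ 2) ∂P ≤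
      ENNReal.ofReal (dist x y ^ 2 - μ * σ * infDist x X ^ 2) := by
    intro y hy
    have hFy_le : ∫ ξ, F ξ y ∂P ≤ Fμ := hFμ.2 <| forall_mem_range.2 fun w ↦
      integral_le_integral_proxObjective hμ.le (fun ξ ↦ (hprox w ξ).1) (henv w)
        (fun ξ ↦ (hXmin y hy ξ).2) (hXint y hy)
    have hgap : σ / 2 * infDist x X ^ 2 ≤
        (∫ ξ, proxObjective (F ξ) μ x (prox x ξ) ∂P) - ∫ ξ, F ξ y ∂P :=
      (hWLR x).trans (sub_le_sub_left hFy_le _)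
    calc ∫⁻ ξ, ENNReal.ofReal (infDist (prox x ξ) X ^ 2) ∂P
        ≤ ∫⁻ ξ, ENNReal.ofReal (dist (prox x ξ) y ^ 2) ∂P := by
          gcongr
          exacts [infDist_nonneg, infDist_le_dist_of_mem hy]
      _ ≤ ENNReal.ofReal (dist x y ^ 2 -
            2 * μ * ((∫ ξ, proxObjective (F ξ) μ x (prox x ξ) ∂P) - ∫ ξ, F ξ y ∂P)) :=
          lintegral_sq_dist_proxPoint_le hF hμ (hprox x) (henv x)
            (fun ξ ↦ (hXmin y hy ξ).1) (hXint y hy)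
      _ ≤ ENNReal.ofReal (dist x y ^ 2 - μ * σ * infDist x X ^ 2) := by
          refine ENNReal.ofReal_le_ofReal ?_
          have hscaled := mul_le_mul_of_nonneg_left hgap (by positivity : 0 ≤ 2 * μ)
          linarith
  have hinfDist : ∫⁻ ξ, ENNReal.ofReal (infDist (prox x ξ) X ^ 2) ∂P ≤
      ENNReal.ofReal (infDist x X ^ 2 - μ * σ * infDist x X ^ 2) :=
    le_comp_infDist (g := fun r ↦ ENNReal.ofReal (r ^ 2 - μ * σ * infDist x X ^ 2)) hXne
      (ENNReal.continuous_ofReal.comp (by fun_prop)) hdist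
  rwa [← one_sub_mul, ENNReal.ofReal_mul' (sq_nonneg _)] at hinfDist

theorem spp_linear_convergence_interpolation_general (hF : ∀ ξ, ConvexOn ℝ (D ξ) (F ξ))
    (hXne : X.Nonempty) (hXint : ∀ y ∈ X, Integrable (fun ξ ↦ F ξ y) P)
    (hXmin : ∀ y ∈ X, ∀ ξ, y ∈ D ξ ∧ IsMinOn (F ξ) (D ξ) y)
    (hμ : 0 < μ) (hprox : ∀ x ξ, IsProxPoint (D ξ) (F ξ) μ x (prox x ξ))
    (henv : ∀ x, Integrable (fun ξ ↦ proxObjective (F ξ) μ x (prox x ξ)) P)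
    (hFμ : IsGLB (range fun x ↦ ∫ ξ, proxObjective (F ξ) μ x (prox x ξ) ∂P) Fμ)
    (hWLR : ∀ x, σ / 2 * infDist x X ^ 2 ≤
      (∫ ξ, proxObjective (F ξ) μ x (prox x ξ) ∂P) - Fμ)
    {x₀ : E} {traj : (k : ℕ) → (Fin k → Ω) → E} (htraj_zero : ∀ ω, traj 0 ω = x₀)
    (htraj_succ : ∀ k (ω : Fin (k + 1) → Ω),
      traj (k + 1) ω = prox (traj k (Fin.init ω)) (ω (Fin.last k))) (k : ℕ) :
    ∫⁻ ω, ENNReal.ofReal (infDist (traj k ω) X ^ 2) ∂(Measure.pi fun _ ↦ P) ≤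
      ENNReal.ofReal (1 - μ * σ) ^ k * ENNReal.ofReal (infDist x₀ X ^ 2) :=
  lintegral_traj_le_pow_mul (V := fun x ↦ ENNReal.ofReal (infDist x X ^ 2)) P
    ENNReal.ofReal_ne_top (lintegral_sq_infDist_prox_le hF hXne hXint hXmin hμ hprox henv hFμ hWLR)
    htraj_zero htraj_succ k

end StochasticProximalPoint

theorem spp_linear_convergence_interpolation
    {n : ℕ} {Ω : Type} [MeasurableSpace Ω] (P : Measure Ω) [IsProbabilityMeasure P]
    -- the components F(·;ξ): proper convex lsc
    (D : Ω → Set (EuclideanSpace ℝ (Fin n)))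
    (F : Ω → EuclideanSpace ℝ (Fin n) → ℝ)
    (hDne : ∀ ξ, (D ξ).Nonempty)
    (hDconv : ∀ ξ, Convex ℝ (D ξ))
    (hFconv : ∀ ξ, ConvexOn ℝ (D ξ) (F ξ))
    (hFlsc : ∀ ξ, IsClosed {p : EuclideanSpace ℝ (Fin n) × ℝ | p.1 ∈ D ξ ∧ F ξ p.1 ≤ p.2})
    -- optimal set X* and optimal value F*
    (Xstar : Set (EuclideanSpace ℝ (Fin n))) (Fstar : ℝ)
    (hXstar : ∀ x, x ∈ Xstar ↔
      ((∀ ξ, x ∈ D ξ) ∧ Integrable (fun ξ => F ξ x) P ∧ ∫ ξ, F ξ x ∂P = Fstar))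
    (hFmin : ∀ x, (∀ ξ, x ∈ D ξ) → Integrable (fun ξ => F ξ x) P → Fstar ≤ ∫ ξ, F ξ x ∂P)
    (hXstarne : Xstar.Nonempty)
    -- proximal map z_μ(x;ξ), Moreau envelope integrability, F_μ*
    (prox : ℝ → EuclideanSpace ℝ (Fin n) → Ω → EuclideanSpace ℝ (Fin n))
    (hprox : ∀ μ, 0 < μ → ∀ x ξ, prox μ x ξ ∈ D ξ ∧ ∀ y ∈ D ξ,
      F ξ (prox μ x ξ) + ‖prox μ x ξ - x‖ ^ 2 / (2 * μ)
        ≤ F ξ y + ‖y - x‖ ^ 2 / (2 * μ))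
    (hFmuint : ∀ μ, 0 < μ → ∀ x, Integrable
      (fun ξ => F ξ (prox μ x ξ) + ‖prox μ x ξ - x‖ ^ 2 / (2 * μ)) P)
    (Fmustar : ℝ → ℝ)
    (hFmustar : ∀ μ, 0 < μ → IsGLB
      (Set.range fun x => ∫ ξ, (F ξ (prox μ x ξ) + ‖prox μ x ξ - x‖ ^ 2 / (2 * μ)) ∂P)
      (Fmustar μ))
    -- weak linear regularity with constants σ_{F,μ} (nonincreasing in μ) and β = 0
    (σ : ℝ → ℝ)
    (hσpos : ∀ μ, 0 < μ → 0 < σ μ)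
    (hσmono : AntitoneOn σ (Set.Ioi (0 : ℝ)))
    (hWLR : ∀ μ, 0 < μ → ∀ x, σ μ / 2 * (infDist x Xstar) ^ 2
      ≤ (∫ ξ, (F ξ (prox μ x ξ) + ‖prox μ x ξ - x‖ ^ 2 / (2 * μ)) ∂P) - Fmustar μ)
    -- interpolation: 0 ∈ ∂F(x*;ξ) for every x* ∈ X* and every ξ
    (hinterp : ∀ xs ∈ Xstar, ∀ ξ, xs ∈ D ξ ∧ ∀ y ∈ D ξ, F ξ xs ≤ F ξ y)
    -- constant stepsize μ > 0 with μ σ_{F,μ} ≤ 1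
    (μ : ℝ) (hμ : 0 < μ) (hμσ : μ * σ μ ≤ 1)
    -- the SPP trajectory: x^k is a function of the first k i.i.d. samples
    (x0 : EuclideanSpace ℝ (Fin n))
    (traj : (k : ℕ) → (Fin k → Ω) → EuclideanSpace ℝ (Fin n))
    (htraj0 : ∀ ω, traj 0 ω = x0)
    (htrajS : ∀ k (ω : Fin (k + 1) → Ω),
      traj (k + 1) ω = prox μ (traj k fun i => ω i.castSucc) (ω (Fin.last k))) :
    ∀ k : ℕ,
      (∫ ω, (infDist (traj k ω) Xstar) ^ 2 ∂(Measure.pi fun _ : Fin k => P))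
        ≤ (1 - μ * σ μ) ^ k * (infDist x0 Xstar) ^ 2 := by
  intro k
  have hρ : 0 ≤ 1 - μ * σ μ := sub_nonneg.2 hμσ
  refine integral_le_of_lintegral_ofReal_le (fun ω ↦ sq_nonneg _) (by positivity) ?_
  rw [ENNReal.ofReal_mul (pow_nonneg hρ k), ENNReal.ofReal_pow hρ]
  exact spp_linear_convergence_interpolation_general hFconv hXstarne
    (fun y hy ↦ ((hXstar y).1 hy).2.1) hinterp hμ (hprox μ hμ) (hFmuint μ hμ) (hFmustar μ hμ)
    (hWLR μ hμ) htraj0 htrajS k
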